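/- The infinite series identity 5π/2 = Σ_{k=0}^{∞} (1/4)^k · [(1/4)_k (1/2)_k] / [(9/8)_k (13/8)_k] · (48k² + 68k + 23) / ((k + 1)(4k + 3)) holds, where the sum is over natural numbers k and all quantities are real numbers. -/

import Mathlib

noncomputable def risingFactorial (a : ℝ) (k : ℕ) : ℝ := ∏ i ∈ Finset.range k, (a + i)

/-!
Two telescoping (Wilf–Zeilberger) summations, each built from a pair `F`, `G` with
`F n j - F (n + 1) j = G n j - G n (j + 1)`: summing over `j` and then over `n` gives
`∑ n, G n 0 = ∑ j, F 0 j`. The first pair shifts both lower parameters of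
`∑ j, (α)_j (β)_j / ((γ)_j (δ)_j)` and turns this series into one whose terms decay like `4⁻ⁿ`;
for `(α, β, γ, δ) = (3/2, 1, 7/4, 2)` that is `3/5` times the series in question. The second pair
shifts `b` in `∑ j, (a)_{j+1} / ((j + 1) (b)_{j+1}) = ψ(b) - ψ(b - a)`; for `a = 1/2`, `b = 3/4`
it identifies the slowly convergent side with the Leibniz series, whence the value `3π/2`.
-/

open Asymptotics Filter Finset Topology

section RisingFactorial

@[simp]
lemma risingFactorial_zero (a : ℝ) : risingFactorial a 0 = 1 :=
  prod_range_zero _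

lemma risingFactorial_succ (a : ℝ) (k : ℕ) :
    risingFactorial a (k + 1) = risingFactorial a k * (a + k) :=
  prod_range_succ _ _

lemma risingFactorial_succ' (a : ℝ) (k : ℕ) :
    risingFactorial a (k + 1) = a * risingFactorial (a + 1) k := by
  simp only [risingFactorial, prod_range_succ', Nat.cast_add, Nat.cast_one, Nat.cast_zero,
    add_zero, add_assoc, add_comm (1 : ℝ), mul_comm]

lemma mul_risingFactorial_add_one (a : ℝ) (k : ℕ) :
    a * risingFactorial (a + 1) k = risingFactorial a k * (a + k) := by
  rw [← risingFactorial_succ', risingFactorial_succ]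

lemma risingFactorial_two (k : ℕ) : risingFactorial 2 k = risingFactorial 1 k * (1 + k) := by
  simpa only [one_mul, one_add_one_eq_two] using mul_risingFactorial_add_one 1 k

lemma risingFactorial_pos {a : ℝ} (ha : 0 < a) (k : ℕ) : 0 < risingFactorial a k :=
  prod_pos fun i _ => by positivity

lemma risingFactorial_nonneg {a : ℝ} (ha : 0 ≤ a) (k : ℕ) : 0 ≤ risingFactorial a k :=
  prod_nonneg fun i _ => by positivity

lemma risingFactorial_le_risingFactorial {a b : ℝ} (ha : 0 ≤ a) (hab : a ≤ b) (k : ℕ) :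
    risingFactorial a k ≤ risingFactorial b k :=
  prod_le_prod (fun i _ => by positivity) fun i _ => by gcongr

lemma risingFactorial_two_mul (a : ℝ) (k : ℕ) :
    risingFactorial (2 * a) (2 * k) =
      4 ^ k * (risingFactorial a k * risingFactorial (a + 1 / 2) k) := by
  induction k with
  | zero => simp
  | succ k ih =>
    simp only [Nat.mul_succ, risingFactorial_succ, ih]
    push_cast
    ring

lemma risingFactorial_div_eq_gammaSeq {a b : ℝ} (ha : 0 < a) (hb : 0 < b) {k : ℕ} (hk : k ≠ 0) :
    risingFactorial a k / risingFactorial b k =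
      Real.GammaSeq b k / Real.GammaSeq a k * ((b + k) / (a + k)) * (k : ℝ) ^ (a - b) := by
  have hk' : (0 : ℝ) < k := by positivity
  have := risingFactorial_pos ha k
  have := risingFactorial_pos hb k
  have seq_eq (c : ℝ) : Real.GammaSeq c k =
      (k : ℝ) ^ c * k.factorial / (risingFactorial c k * (c + k)) := by
    rw [← risingFactorial_succ]; rfl
  rw [seq_eq, seq_eq, Real.rpow_sub hk']
  field_simp

lemma isBigO_risingFactorial_div {a b : ℝ} (ha : 0 < a) (hb : 0 < b) :
    (fun k => risingFactorial a k / risingFactorial b k) =O[atTop]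
      fun k : ℕ => (k : ℝ) ^ (a - b) := by
  have hratio : Tendsto (fun k : ℕ => (b + k) / (a + k)) atTop (𝓝 1) := by
    simpa using tendsto_add_mul_div_add_mul_atTop_nhds b a 1 one_ne_zero
  have hbounded := (((Real.GammaSeq_tendsto_Gamma b).div (Real.GammaSeq_tendsto_Gamma a)
    (Real.Gamma_pos_of_pos ha).ne').mul hratio).isBigO_one ℝ
  refine (hbounded.mul (isBigO_refl (fun k : ℕ => (k : ℝ) ^ (a - b)) atTop)).congr' ?_ ?_
  · filter_upwards [eventually_ne_atTop 0] with k hk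
    exact (risingFactorial_div_eq_gammaSeq ha hb hk).symm
  · simp only [one_mul, EventuallyEq.rfl]

lemma tendsto_natCast_rpow_atTop_of_neg {y : ℝ} (hy : y < 0) :
    Tendsto (fun k : ℕ => (k : ℝ) ^ y) atTop (𝓝 0) := by
  simpa only [neg_neg, Function.comp_def] using
    (tendsto_rpow_neg_atTop (neg_pos.2 hy)).comp tendsto_natCast_atTop_atTop

lemma tendsto_risingFactorial_div {a b : ℝ} (ha : 0 < a) (hab : a < b) :
    Tendsto (fun k => risingFactorial a k / risingFactorial b k) atTop (𝓝 0) :=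
  (isBigO_risingFactorial_div ha (ha.trans hab)).trans_tendsto
    (tendsto_natCast_rpow_atTop_of_neg (sub_neg.2 hab))

end RisingFactorial

section WilfZeilberger

lemma tsum_sub_tsum_of_telescoping {f g h : ℕ → ℝ} (hf : Summable f) (hg : Summable g)
    (hh : Tendsto h atTop (𝓝 0)) (hrec : ∀ j, f j - g j = h j - h (j + 1)) :
    ∑' j, f j - ∑' j, g j = h 0 := by
  refine tendsto_nhds_unique (hf.hasSum.sub hg.hasSum).tendsto_sum_nat ?_
  simp only [hrec, sum_range_sub']
  simpa using tendsto_const_nhds.sub hh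

theorem tendsto_sum_of_wilfZeilberger {F G : ℕ → ℕ → ℝ} {e : ℕ → ℝ}
    (hF : ∀ n j, 0 ≤ F n j) (hF_summable : Summable (F 0)) (hF_le : ∀ n j, F n j ≤ e n * F 0 j)
    (he : Tendsto e atTop (𝓝 0)) (hG : ∀ n, Tendsto (G n) atTop (𝓝 0))
    (hrec : ∀ n j, F n j - F (n + 1) j = G n j - G n (j + 1)) :
    Tendsto (fun N => ∑ n ∈ range N, G n 0) atTop (𝓝 (∑' j, F 0 j)) := by
  have hsummable (n) : Summable (F n) :=
    .of_nonneg_of_le (hF n) (hF_le n) (hF_summable.mul_left _)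
  have hsum_tendsto : Tendsto (fun n => ∑' j, F n j) atTop (𝓝 0) := by
    refine squeeze_zero (fun n => tsum_nonneg (hF n)) (fun n => ?_)
      (by simpa using he.mul_const (∑' j, F 0 j))
    rw [← tsum_mul_left]
    exact (hsummable n).tsum_le_tsum (hF_le n) (hF_summable.mul_left _)
  have hstep (n) : G n 0 = ∑' j, F n j - ∑' j, F (n + 1) j :=
    (tsum_sub_tsum_of_telescoping (hsummable n) (hsummable (n + 1)) (hG n) (hrec n)).symm
  simp only [hstep, sum_range_sub' fun n => ∑' j, F n j]
  simpa using tendsto_const_nhds.sub hsum_tendsto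

end WilfZeilberger

section Acceleration

/-- The `j`-th term `(α)_j (β)_j / ((γ)_j (δ)_j)` of the hypergeometric series
`₃F₂(α, β, 1; γ, δ; 1)`. -/
noncomputable def hypergeometricTerm (α β γ δ : ℝ) (j : ℕ) : ℝ :=
  risingFactorial α j * risingFactorial β j / (risingFactorial γ j * risingFactorial δ j)

/-- The first member `F n j` of the Wilf–Zeilberger pair that accelerates
`∑ j, hypergeometricTerm α β γ δ j = ∑ j, F 0 j`. -/
noncomputable def accelKernel (α β γ δ : ℝ) (n j : ℕ) : ℝ :=
  risingFactorial (γ - α) n * risingFactorial (γ - β) n * risingFactorial (δ - α) n *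
      risingFactorial (δ - β) n / risingFactorial (γ + δ - α - β - 1) (2 * n) *
    (risingFactorial α j * risingFactorial β j /
      (risingFactorial γ (n + j) * risingFactorial δ (n + j)))

/-- The quadratic polynomial in `n` appearing in the accelerated series. -/
noncomputable def accelPoly (α β γ δ n : ℝ) : ℝ :=
  (γ + δ - α - β + 2 * n) * (γ + δ - 1 + 2 * n) - (γ + n) * (δ + n) + α * β

/-- The `n`-th term of the accelerated form of `∑ j, hypergeometricTerm α β γ δ j`. -/
noncomputable def accelTerm (α β γ δ : ℝ) (n : ℕ) : ℝ :=
  risingFactorial (γ - α) n * risingFactorial (γ - β) n * risingFactorial (δ - α) n *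
      risingFactorial (δ - β) n / (risingFactorial γ n * risingFactorial δ n *
        risingFactorial (γ + δ - α - β - 1) (2 * n + 2)) * accelPoly α β γ δ n

/-- The second member `G n j` of the Wilf–Zeilberger pair of `accelKernel`. -/
noncomputable def accelFlux (α β γ δ : ℝ) (n j : ℕ) : ℝ :=
  accelKernel α β γ δ n j *
    (((γ + δ - α - β + 2 * n) * j + accelPoly α β γ δ n) /
      ((γ + δ - α - β - 1 + 2 * n) * (γ + δ - α - β + 2 * n)))

variable {α β γ δ : ℝ}

lemma isBigO_hypergeometricTerm (hα : 0 < α) (hβ : 0 < β) (hγ : 0 < γ) (hδ : 0 < δ) :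
    hypergeometricTerm α β γ δ =O[atTop] fun k : ℕ => (k : ℝ) ^ (α + β - γ - δ) := by
  refine ((isBigO_risingFactorial_div hα hγ).mul (isBigO_risingFactorial_div hβ hδ)).congr' ?_ ?_
  · exact .of_eq (funext fun k => div_mul_div_comm ..)
  · filter_upwards [eventually_gt_atTop 0] with k hk
    rw [← Real.rpow_add (by positivity)]
    ring_nf

lemma summable_hypergeometricTerm (hα : 0 < α) (hβ : 0 < β) (hγ : 0 < γ) (hδ : 0 < δ)
    (hs : α + β + 1 < γ + δ) : Summable (hypergeometricTerm α β γ δ) :=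
  summable_of_isBigO_nat (Real.summable_nat_rpow.2 (by linarith))
    (isBigO_hypergeometricTerm hα hβ hγ hδ)

lemma tendsto_natCast_mul_hypergeometricTerm (hα : 0 < α) (hβ : 0 < β) (hγ : 0 < γ) (hδ : 0 < δ)
    (hs : α + β + 1 < γ + δ) :
    Tendsto (fun j : ℕ => j * hypergeometricTerm α β γ δ j) atTop (𝓝 0) := by
  have hO := (isBigO_refl (fun j : ℕ => (j : ℝ)) atTop).mul
    (isBigO_hypergeometricTerm hα hβ hγ hδ)
  refine hO.trans_tendsto <| (tendsto_natCast_rpow_atTop_of_neg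
    (by linarith : 1 + (α + β - γ - δ) < 0)).congr' ?_
  filter_upwards [eventually_gt_atTop 0] with j hj
  rw [Real.rpow_add (by positivity), Real.rpow_one]

lemma accelKernel_zero : accelKernel α β γ δ 0 = hypergeometricTerm α β γ δ := by
  ext j
  simp [accelKernel, hypergeometricTerm]

lemma accelKernel_nonneg (hα : 0 < α) (hβ : 0 < β) (hαγ : α ≤ γ) (hβγ : β ≤ γ) (hαδ : α ≤ δ)
    (hβδ : β ≤ δ) (hs : α + β + 1 < γ + δ) (n j : ℕ) : 0 ≤ accelKernel α β γ δ n j := by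
  have := risingFactorial_nonneg (sub_nonneg.2 hαγ) n
  have := risingFactorial_nonneg (sub_nonneg.2 hβγ) n
  have := risingFactorial_nonneg (sub_nonneg.2 hαδ) n
  have := risingFactorial_nonneg (sub_nonneg.2 hβδ) n
  have := risingFactorial_pos (show 0 < γ + δ - α - β - 1 by linarith) (2 * n)
  have := risingFactorial_pos hα j
  have := risingFactorial_pos hβ j
  have := risingFactorial_pos (hα.trans_le hαγ) (n + j)
  have := risingFactorial_pos (hα.trans_le hαδ) (n + j)
  unfold accelKernel
  positivity

lemma accelKernel_succ_left (n j : ℕ) :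
    accelKernel α β γ δ (n + 1) j = accelKernel α β γ δ n j *
      ((γ + n - α) * (γ + n - β) * (δ + n - α) * (δ + n - β) /
        ((γ + δ - α - β - 1 + 2 * n) * (γ + δ - α - β + 2 * n) *
          ((γ + n + j) * (δ + n + j)))) := by
  simp only [accelKernel, Nat.mul_succ, add_right_comm n 1 j, risingFactorial_succ,
    div_eq_mul_inv, mul_inv]
  push_cast
  ring

lemma accelKernel_succ_right (n j : ℕ) :
    accelKernel α β γ δ n (j + 1) = accelKernel α β γ δ n j *
      ((α + j) * (β + j) / ((γ + n + j) * (δ + n + j))) := by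
  simp only [accelKernel, ← Nat.add_assoc, risingFactorial_succ, div_eq_mul_inv, mul_inv]
  push_cast
  ring

lemma four_mul_mul_sub_le {C D : ℝ} (hα : 0 ≤ α) (hβ : 0 ≤ β) (hαC : α ≤ C) (hβC : β ≤ C)
    (hαD : α ≤ D) :
    4 * ((C - α) * (C - β) * (D - α) * (D - β)) ≤ (C + D - α - β) ^ 2 * (C * D) := by
  have hamgm : 4 * (C - α) * (D - β) ≤ (C + D - α - β) ^ 2 :=
    (four_mul_le_sq_add _ _).trans_eq (by ring)
  have hprod : (C - β) * (D - α) ≤ C * D :=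
    mul_le_mul (by linarith) (by linarith) (by linarith) (by linarith)
  calc 4 * ((C - α) * (C - β) * (D - α) * (D - β))
      = 4 * (C - α) * (D - β) * ((C - β) * (D - α)) := by ring
    _ ≤ (C + D - α - β) ^ 2 * (C * D) :=
      mul_le_mul hamgm hprod (mul_nonneg (by linarith) (by linarith)) (sq_nonneg _)

lemma accelKernel_succ_left_le (hα : 0 < α) (hβ : 0 < β) (hαγ : α ≤ γ) (hβγ : β ≤ γ)
    (hαδ : α ≤ δ) (hβδ : β ≤ δ) (hs : α + β + 1 < γ + δ) (n j : ℕ) :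
    accelKernel α β γ δ (n + 1) j ≤ accelKernel α β γ δ n j *
      ((γ + δ - α - β + 2 * n) / (4 * (γ + δ - α - β - 1 + 2 * n))) := by
  have : (0 : ℝ) ≤ n := by positivity
  have hj : (0 : ℝ) ≤ j := by positivity
  have hγ : 0 < γ := by linarith
  have hδ : 0 < δ := by linarith
  have hu : 0 < γ + δ - α - β - 1 + 2 * n := by linarith
  have hu' : 0 < γ + δ - α - β + 2 * n := by linarith
  rw [accelKernel_succ_left]
  refine mul_le_mul_of_nonneg_left ?_ (accelKernel_nonneg hα hβ hαγ hβγ hαδ hβδ hs n j)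
  rw [div_le_div_iff₀ (by positivity) (by positivity)]
  calc (γ + n - α) * (γ + n - β) * (δ + n - α) * (δ + n - β) *
        (4 * (γ + δ - α - β - 1 + 2 * n))
      = 4 * ((γ + n - α) * (γ + n - β) * (δ + n - α) * (δ + n - β)) *
        (γ + δ - α - β - 1 + 2 * n) := by ring
    _ ≤ (γ + n + (δ + n) - α - β) ^ 2 * ((γ + n) * (δ + n)) *
        (γ + δ - α - β - 1 + 2 * n) :=
      mul_le_mul_of_nonneg_right (four_mul_mul_sub_le hα.le hβ.le (by linarith) (by linarith)
        (by linarith)) hu.le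
    _ = (γ + δ - α - β + 2 * n) * ((γ + δ - α - β - 1 + 2 * n) *
        (γ + δ - α - β + 2 * n) * ((γ + n) * (δ + n))) := by ring
    _ ≤ (γ + δ - α - β + 2 * n) * ((γ + δ - α - β - 1 + 2 * n) *
        (γ + δ - α - β + 2 * n) * ((γ + n + j) * (δ + n + j))) := by
      gcongr _ * (_ * (?_ * ?_)) <;> exact le_add_of_nonneg_right hj

lemma accelKernel_le (hα : 0 < α) (hβ : 0 < β) (hαγ : α ≤ γ) (hβγ : β ≤ γ) (hαδ : α ≤ δ)
    (hβδ : β ≤ δ) (hs : α + β + 1 < γ + δ) (n j : ℕ) :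
    accelKernel α β γ δ n j ≤
      (1 + 2 / (γ + δ - α - β - 1) * n) * (1 / 4) ^ n * accelKernel α β γ δ 0 j := by
  induction n with
  | zero => simp
  | succ n ih =>
    have hs' : 0 < γ + δ - α - β - 1 := by linarith
    have hu' : 0 < γ + δ - α - β + 2 * n := by linarith [(n.cast_nonneg : (0 : ℝ) ≤ n)]
    have h0 := accelKernel_nonneg hα hβ hαγ hβγ hαδ hβδ hs 0 j
    calc accelKernel α β γ δ (n + 1) j
        ≤ accelKernel α β γ δ n j *
          ((γ + δ - α - β + 2 * n) / (4 * (γ + δ - α - β - 1 + 2 * n))) :=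
          accelKernel_succ_left_le hα hβ hαγ hβγ hαδ hβδ hs n j
      _ ≤ (1 + 2 / (γ + δ - α - β - 1) * n) * (1 / 4) ^ n * accelKernel α β γ δ 0 j *
          ((γ + δ - α - β + 2 * n) / (4 * (γ + δ - α - β - 1 + 2 * n))) := by gcongr
      _ = (γ + δ - α - β + 2 * n) / (γ + δ - α - β - 1) * (1 / 4) ^ (n + 1) *
          accelKernel α β γ δ 0 j := by
        field_simp
        ring
      _ ≤ (1 + 2 / (γ + δ - α - β - 1) * (n + 1 : ℕ)) * (1 / 4) ^ (n + 1) *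
          accelKernel α β γ δ 0 j := by
        gcongr
        rw [div_le_iff₀ hs']
        push_cast
        field_simp
        linarith

lemma tendsto_one_add_mul_mul_pow (c : ℝ) {r : ℝ} (hr : 0 ≤ r) (hr' : r < 1) :
    Tendsto (fun n : ℕ => (1 + c * n) * r ^ n) atTop (𝓝 0) := by
  simpa [add_mul, mul_assoc] using (tendsto_pow_atTop_nhds_zero_of_lt_one hr hr').add
    ((tendsto_self_mul_const_pow_of_lt_one hr hr').const_mul c)

lemma tendsto_accelFlux (hα : 0 < α) (hβ : 0 < β) (hαγ : α ≤ γ) (hβγ : β ≤ γ) (hαδ : α ≤ δ)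
    (hβδ : β ≤ δ) (hs : α + β + 1 < γ + δ) (n : ℕ) :
    Tendsto (accelFlux α β γ δ n) atTop (𝓝 0) := by
  have hγ := hα.trans_le hαγ
  have hδ := hα.trans_le hαδ
  have hnonneg := accelKernel_nonneg hα hβ hαγ hβγ hαδ hβδ hs n
  have hle (j) := accelKernel_le hα hβ hαγ hβγ hαδ hβδ hs n j
  simp only [accelKernel_zero] at hle
  set e := (1 + 2 / (γ + δ - α - β - 1) * n) * (1 / 4 : ℝ) ^ n
  have hkernel : Tendsto (accelKernel α β γ δ n) atTop (𝓝 0) :=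
    squeeze_zero hnonneg hle <| by
      simpa using (summable_hypergeometricTerm hα hβ hγ hδ hs).tendsto_atTop_zero.const_mul e
  have hmul : Tendsto (fun j : ℕ => j * accelKernel α β γ δ n j) atTop (𝓝 0) := by
    refine squeeze_zero (fun j => mul_nonneg j.cast_nonneg (hnonneg j))
      (fun j => mul_le_mul_of_nonneg_left (hle j) j.cast_nonneg) ?_
    simpa [mul_left_comm] using
      (tendsto_natCast_mul_hypergeometricTerm hα hβ hγ hδ hs).const_mul e
  have hlim := ((hmul.const_mul (γ + δ - α - β + 2 * n)).add
    (hkernel.const_mul (accelPoly α β γ δ n))).div_const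
      ((γ + δ - α - β - 1 + 2 * n) * (γ + δ - α - β + 2 * n))
  simp only [mul_zero, add_zero, zero_div] at hlim
  refine hlim.congr fun j => ?_
  rw [accelFlux]
  ring

lemma accel_certificate {C D x : ℝ} (hC : C + x ≠ 0) (hD : D + x ≠ 0)
    (hu : C + D - α - β - 1 ≠ 0) (hu' : C + D - α - β ≠ 0) :
    1 - (C - α) * (C - β) * (D - α) * (D - β) /
        ((C + D - α - β - 1) * (C + D - α - β) * ((C + x) * (D + x))) =
      ((C + D - α - β) * x + accelPoly α β C D 0) /
          ((C + D - α - β - 1) * (C + D - α - β)) -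
        (α + x) * (β + x) / ((C + x) * (D + x)) *
          (((C + D - α - β) * (x + 1) + accelPoly α β C D 0) /
            ((C + D - α - β - 1) * (C + D - α - β))) := by
  rw [accelPoly]
  field_simp
  ring

lemma accelKernel_sub_eq_accelFlux_sub (hγ : 0 < γ) (hδ : 0 < δ)
    (hs : α + β + 1 < γ + δ) (n j : ℕ) :
    accelKernel α β γ δ n j - accelKernel α β γ δ (n + 1) j =
      accelFlux α β γ δ n j - accelFlux α β γ δ n (j + 1) := by
  have : (0 : ℝ) ≤ n := n.cast_nonneg
  have hpoly : accelPoly α β (γ + n) (δ + n) 0 = accelPoly α β γ δ n := by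
    simp only [accelPoly]; ring
  have hcert := accel_certificate (α := α) (β := β) (C := γ + n) (D := δ + n) (x := j)
    (by positivity) (by positivity) (by linarith) (by linarith)
  rw [hpoly, show γ + n + (δ + n) - α - β = γ + δ - α - β + 2 * n by ring,
    show γ + δ - α - β + 2 * n - 1 = γ + δ - α - β - 1 + 2 * n by ring] at hcert
  rw [accelFlux, accelFlux, accelKernel_succ_left, accelKernel_succ_right, Nat.cast_add_one]
  linear_combination accelKernel α β γ δ n j * hcert

lemma accelFlux_zero_right (n : ℕ) : accelFlux α β γ δ n 0 = accelTerm α β γ δ n := by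
  simp only [accelTerm, accelFlux, accelKernel, risingFactorial_succ,
    risingFactorial_zero, add_zero, div_eq_mul_inv, mul_inv]
  push_cast
  ring

theorem tendsto_sum_hypergeometricTerm_accel (hα : 0 < α) (hβ : 0 < β) (hαγ : α ≤ γ)
    (hβγ : β ≤ γ) (hαδ : α ≤ δ) (hβδ : β ≤ δ) (hs : α + β + 1 < γ + δ) :
    Tendsto (fun N => ∑ n ∈ range N, accelTerm α β γ δ n) atTop
      (𝓝 (∑' j, hypergeometricTerm α β γ δ j)) := by
  have hγ := hα.trans_le hαγ
  have hδ := hα.trans_le hαδ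
  simp only [← accelFlux_zero_right, ← accelKernel_zero]
  refine tendsto_sum_of_wilfZeilberger (accelKernel_nonneg hα hβ hαγ hβγ hαδ hβδ hs) ?_
    (accelKernel_le hα hβ hαγ hβγ hαδ hβδ hs)
    (tendsto_one_add_mul_mul_pow _ (by norm_num) (by norm_num))
    (tendsto_accelFlux hα hβ hαγ hβγ hαδ hβδ hs) (accelKernel_sub_eq_accelFlux_sub hγ hδ hs)
  exact accelKernel_zero ▸ summable_hypergeometricTerm hα hβ hγ hδ hs

end Acceleration

section Digamma

/-- The `j`-th term of the series `∑ j, (a)_{j+1} / ((j + 1) (b)_{j+1}) = ψ(b) - ψ(b - a)`, where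
`ψ` is the digamma function. -/
noncomputable def digammaTerm (a b : ℝ) (j : ℕ) : ℝ :=
  risingFactorial a (j + 1) / ((j + 1) * risingFactorial b (j + 1))

lemma digammaTerm_eq_mul_hypergeometricTerm (a b : ℝ) (j : ℕ) :
    digammaTerm a b j = a / b * hypergeometricTerm (a + 1) 1 (b + 1) 2 j := by
  have := risingFactorial_pos one_pos j
  rw [digammaTerm, hypergeometricTerm, risingFactorial_two, risingFactorial_succ',
    risingFactorial_succ']
  field_simp
  ring

variable {a b : ℝ}

lemma digammaTerm_nonneg (ha : 0 < a) (hb : 0 < b) (j : ℕ) : 0 ≤ digammaTerm a b j := by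
  have := risingFactorial_pos ha (j + 1)
  have := risingFactorial_pos hb (j + 1)
  unfold digammaTerm
  positivity

lemma summable_digammaTerm (ha : 0 < a) (hab : a < b) : Summable (digammaTerm a b) := by
  simp only [funext (digammaTerm_eq_mul_hypergeometricTerm a b)]
  exact (summable_hypergeometricTerm (by linarith) one_pos (by linarith) two_pos
    (by linarith)).mul_left _

lemma digammaTerm_le_div_mul {b' : ℝ} (ha : 0 < a) (hb : 0 < b) (hbb' : b ≤ b') (j : ℕ) :
    digammaTerm a b' j ≤ b / b' * digammaTerm a b j := by
  have := risingFactorial_pos ha (j + 1)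
  have := risingFactorial_pos (show 0 < b + 1 by linarith) j
  have := risingFactorial_le_risingFactorial (show 0 ≤ b + 1 by linarith)
    (show b + 1 ≤ b' + 1 by linarith) j
  have hb' := hb.trans_le hbb'
  calc digammaTerm a b' j
      = risingFactorial a (j + 1) / ((j + 1) * (b' * risingFactorial (b' + 1) j)) := by
        rw [digammaTerm, risingFactorial_succ' b']
    _ ≤ risingFactorial a (j + 1) / ((j + 1) * (b' * risingFactorial (b + 1) j)) := by gcongr
    _ = b / b' * digammaTerm a b j := by
        rw [digammaTerm, risingFactorial_succ' b]
        field_simp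

lemma digammaTerm_sub_digammaTerm_add_one (hb : 0 < b) (hab : a ≠ b) (j : ℕ) :
    digammaTerm a b j - digammaTerm a (b + 1) j =
      risingFactorial a (j + 1) / risingFactorial b (j + 1) / (b - a) -
        risingFactorial a (j + 2) / risingFactorial b (j + 2) / (b - a) := by
  have hba : b - a ≠ 0 := sub_ne_zero.2 hab.symm
  have := risingFactorial_pos hb (j + 1)
  have hshift : risingFactorial (b + 1) (j + 1) =
      risingFactorial b (j + 1) * (b + (j + 1)) / b := by
    rw [eq_div_iff hb.ne', mul_comm, mul_risingFactorial_add_one, Nat.cast_add_one]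
  rw [digammaTerm, digammaTerm, hshift, risingFactorial_succ a (j + 1),
    risingFactorial_succ b (j + 1), Nat.cast_add_one]
  field_simp
  ring

theorem tendsto_sum_inv_sub_inv_digammaTerm (ha : 0 < a) (hab : a < b) :
    Tendsto (fun N => ∑ n ∈ range N, (1 / (b - a + n) - 1 / (b + n))) atTop
      (𝓝 (∑' j, digammaTerm a b j)) := by
  have hb := ha.trans hab
  have hbn (n : ℕ) : a < b + n := by linarith [(n.cast_nonneg : (0 : ℝ) ≤ n)]
  have htendsto : Tendsto (fun n : ℕ => b / (b + n)) atTop (𝓝 0) :=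
    tendsto_const_nhds.div_atTop
      (tendsto_atTop_add_const_left _ _ tendsto_natCast_atTop_atTop)
  have hwz := tendsto_sum_of_wilfZeilberger (F := fun n => digammaTerm a (b + n))
    (G := fun n j => risingFactorial a (j + 1) / risingFactorial (b + n) (j + 1) / (b + n - a))
    (fun n => digammaTerm_nonneg ha (ha.trans (hbn n)))
    (by simpa using summable_digammaTerm ha hab)
    (fun n j => by simpa using digammaTerm_le_div_mul ha hb (by simp : b ≤ b + n) j)
    htendsto
    (fun n => by
      simpa using ((tendsto_risingFactorial_div ha (hbn n)).comp
        (tendsto_add_atTop_nat 1)).div_const (b + n - a))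
    (fun n j => by
      simpa [add_assoc] using
        digammaTerm_sub_digammaTerm_add_one (ha.trans (hbn n)) (hbn n).ne j)
  simp only [Nat.cast_zero, add_zero] at hwz
  refine hwz.congr fun N => sum_congr rfl fun n _ => ?_
  have : b + n ≠ 0 := by linarith [hbn n]
  have : b - a + n ≠ 0 := by linarith [hbn n]
  have : b + n - a ≠ 0 := by linarith [hbn n]
  simp only [zero_add, risingFactorial_succ, risingFactorial_zero, Nat.cast_zero, add_zero, one_mul]
  field_simp
  ring

end Digamma

section Pi

lemma sum_range_inv_quarter_sub_inv_three_quarters (N : ℕ) :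
    ∑ n ∈ range N, (1 / ((1 / 4 : ℝ) + n) - 1 / (3 / 4 + n)) =
      4 * ∑ i ∈ range (2 * N), (-1 : ℝ) ^ i / (2 * i + 1) := by
  induction N with
  | zero => simp
  | succ N ih =>
    rw [sum_range_succ, ih, Nat.mul_succ, sum_range_succ, sum_range_succ, pow_succ,
      (even_two_mul N).neg_one_pow]
    push_cast
    field_simp
    ring

lemma tsum_digammaTerm_one_half_three_quarters :
    ∑' j, digammaTerm (1 / 2) (3 / 4) j = Real.pi := by
  have hleibniz := (Real.tendsto_sum_pi_div_four.comp
    (tendsto_id.const_mul_atTop' two_pos)).const_mul 4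
  have hdigamma := tendsto_sum_inv_sub_inv_digammaTerm (a := 1 / 2) (b := 3 / 4) (by norm_num)
    (by norm_num)
  norm_num only [sum_range_inv_quarter_sub_inv_three_quarters] at hdigamma
  rw [tendsto_nhds_unique hdigamma hleibniz]
  ring

lemma tsum_hypergeometricTerm_eq_three_halves_mul_pi :
    ∑' j, hypergeometricTerm (3 / 2) 1 (7 / 4) 2 j = 3 / 2 * Real.pi := by
  rw [← tsum_digammaTerm_one_half_three_quarters, ← tsum_mul_left]
  congr with j
  rw [digammaTerm_eq_mul_hypergeometricTerm]
  norm_num only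
  ring

lemma risingFactorial_quarter_two_mul_add_two (k : ℕ) :
    risingFactorial (1 / 4) (2 * k + 2) =
      5 / 16 * 4 ^ k * (risingFactorial (9 / 8) k * risingFactorial (13 / 8) k) := by
  have hdup := risingFactorial_two_mul (9 / 8) k
  norm_num at hdup
  rw [risingFactorial_succ', risingFactorial_succ']
  norm_num [hdup]
  ring

lemma accelTerm_three_halves_one_seven_quarters_two (k : ℕ) :
    accelTerm (3 / 2) 1 (7 / 4) 2 k = 3 / 5 * ((1 / 4) ^ k *
      (risingFactorial (1 / 4) k * risingFactorial (1 / 2) k) /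
        (risingFactorial (9 / 8) k * risingFactorial (13 / 8) k) *
          ((48 * (k : ℝ) ^ 2 + 68 * k + 23) / ((k + 1) * (4 * k + 3)))) := by
  have := risingFactorial_pos one_pos k
  have := risingFactorial_pos (show (0 : ℝ) < 3 / 4 by norm_num) k
  have := risingFactorial_pos (show (0 : ℝ) < 9 / 8 by norm_num) k
  have := risingFactorial_pos (show (0 : ℝ) < 13 / 8 by norm_num) k
  have hseven_quarters : risingFactorial (7 / 4) k =
      risingFactorial (3 / 4) k * ((4 * k + 3) / 3) := by
    have := mul_risingFactorial_add_one (3 / 4) k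
    norm_num at this
    linear_combination 4 / 3 * this
  norm_num [accelTerm, accelPoly, risingFactorial_two, hseven_quarters, one_div_pow,
    risingFactorial_quarter_two_mul_add_two]
  field_simp
  ring

lemma accelTerm_three_halves_one_seven_quarters_two_nonneg (k : ℕ) :
    0 ≤ accelTerm (3 / 2) 1 (7 / 4) 2 k := by
  rw [accelTerm_three_halves_one_seven_quarters_two]
  have := risingFactorial_pos (show (0 : ℝ) < 1 / 4 by norm_num) k
  have := risingFactorial_pos (show (0 : ℝ) < 1 / 2 by norm_num) k
  have := risingFactorial_pos (show (0 : ℝ) < 9 / 8 by norm_num) k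
  have := risingFactorial_pos (show (0 : ℝ) < 13 / 8 by norm_num) k
  positivity

end Pi

theorem stmt_12 :
    5 * Real.pi / 2 =
      ∑' k : ℕ, (1/4 : ℝ) ^ k * (risingFactorial (1/4) k * risingFactorial (1/2) k) /
        (risingFactorial (9/8) k * risingFactorial (13/8) k) * ((48 * (k:ℝ)^2 + 68 * (k:ℝ) + 23) / (((k:ℝ) + 1) * (4 * (k:ℝ) + 3))) := by
  have hlim := tendsto_sum_hypergeometricTerm_accel (α := 3 / 2) (β := 1) (γ := 7 / 4) (δ := 2)
    (by norm_num) (by norm_num) (by norm_num) (by norm_num) (by norm_num) (by norm_num)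
    (by norm_num)
  have hsum := ((hasSum_iff_tendsto_nat_of_nonneg
    accelTerm_three_halves_one_seven_quarters_two_nonneg _).2 hlim).tsum_eq
  simp only [tsum_hypergeometricTerm_eq_three_halves_mul_pi,
    accelTerm_three_halves_one_seven_quarters_two, tsum_mul_left] at hsum
  linear_combination -5 / 3 * hsum
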